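/- Let q be a prime power with q ≡ 1 (mod 52) and let β be a primitive 13th root of unity in F_q. Then (q,13) gives a 3-design if and only if the sequence (χ(1−β), χ(1−β²), χ(1−β³), χ(1−β⁴), χ(1−β⁵), χ(1−β⁶)) is, up to a global sign, one of the following four sequences: (1,1,−1,1,−1,−1), (1,1,−1,−1,−1,1), (1,−1,1,1,−1,−1), (1,−1,1,−1,−1,1). Here χ is the quadratic residue character of F_q. -/

import Mathlib

/-!
Setting: `F` is a finite field of order `q`. The projective line `PG(1,q)` is
modelled as `Projectivization F (Fin 2 → F)`. Since scalar matrices act trivially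
on the projective line, the images of a set under all elements of `SL(2,F)` form
exactly its `PSL(2,F)`-orbit; `mapSL g` is the map of the projective line induced
by `g : SL(2,F)`. For `k ∣ q - 1`, the unique subgroup of order `k` of `Fˣ` is the
set of `k`-th roots of unity `{x : F | x ^ k = 1}`, embedded into the projective
line via `x ↦ [x : 1]`. `(q, k)` gives a 3-design iff there is `lam > 0` such that
every 3-subset of the projective line lies in exactly `lam` blocks of the orbit.
-/

noncomputable section

open Matrix

/-- The point at infinity `[1 : 0]` of the projective line over `F`. -/
def inftyPt (F : Type) [Field F] : Projectivization F (Fin 2 → F) :=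
  Projectivization.mk F ![1, 0] (by
    intro h
    simpa using congrFun h 0)

/-- The embedding of `F` into the projective line, `x ↦ [x : 1]`. -/
def embedPt (F : Type) [Field F] (x : F) : Projectivization F (Fin 2 → F) :=
  Projectivization.mk F ![x, 1] (by
    intro h
    simpa using congrFun h 1)

/-- The action of `g : SL(2,F)` on the projective line (as linear fractional
transformation). -/
def mapSL {F : Type} [Field F] (g : Matrix.SpecialLinearGroup (Fin 2) F) :
    Projectivization F (Fin 2 → F) → Projectivization F (Fin 2 → F) :=
  Projectivization.map (Matrix.SpecialLinearGroup.toLin' g : (Fin 2 → F) →ₗ[F] (Fin 2 → F))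
    (Matrix.SpecialLinearGroup.toLin' g).injective

/-- The starter block: the unique subgroup of order `k` of `Fˣ` (the `k`-th roots
of unity, for `k ∣ q - 1`), regarded as a subset of the projective line. -/
def starterB (F : Type) [Field F] (k : ℕ) : Set (Projectivization F (Fin 2 → F)) :=
  embedPt F '' {x : F | x ^ k = 1}

/-- The `PSL(2,F)`-orbit `GB` of the starter block. -/
def designBlocks (F : Type) [Field F] (k : ℕ) :
    Set (Set (Projectivization F (Fin 2 → F))) :=
  {S | ∃ g : Matrix.SpecialLinearGroup (Fin 2) F, S = mapSL g '' starterB F k}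

/-- `GB` is the block set of a `3-(q+1, k, lam)` design: `lam` is positive and every
3-subset of the projective line is contained in exactly `lam` blocks. -/
def isThreeDesign (F : Type) [Field F] (k lam : ℕ) : Prop :=
  0 < lam ∧
    ∀ T : Finset (Projectivization F (Fin 2 → F)), T.card = 3 →
      {S ∈ designBlocks F k | (T : Set (Projectivization F (Fin 2 → F))) ⊆ S}.ncard = lam

/-- `(q, k)` gives a 3-design. -/
def gives3Design (F : Type) [Field F] (k : ℕ) : Prop :=
  ∃ lam : ℕ, isThreeDesign F k lam

/-- The sequence `(χ(1-β), χ(1-β²), …, χ(1-β⁶))` is, up to a global sign `ε`, one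
of the four sequences `(1,1,-1,1,-1,-1)`, `(1,1,-1,-1,-1,1)`, `(1,-1,1,1,-1,-1)`,
`(1,-1,1,-1,-1,1)`. -/
def goodChiSequence (F : Type) [Field F] [Fintype F] [DecidableEq F] (β : F) : Prop :=
  ∃ ε : ℤ, (ε = 1 ∨ ε = -1) ∧
    ((quadraticChar F (1 - β), quadraticChar F (1 - β ^ 2), quadraticChar F (1 - β ^ 3),
        quadraticChar F (1 - β ^ 4), quadraticChar F (1 - β ^ 5), quadraticChar F (1 - β ^ 6)) =
          (ε, ε, -ε, ε, -ε, -ε) ∨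
      (quadraticChar F (1 - β), quadraticChar F (1 - β ^ 2), quadraticChar F (1 - β ^ 3),
        quadraticChar F (1 - β ^ 4), quadraticChar F (1 - β ^ 5), quadraticChar F (1 - β ^ 6)) =
          (ε, ε, -ε, -ε, -ε, ε) ∨
      (quadraticChar F (1 - β), quadraticChar F (1 - β ^ 2), quadraticChar F (1 - β ^ 3),
        quadraticChar F (1 - β ^ 4), quadraticChar F (1 - β ^ 5), quadraticChar F (1 - β ^ 6)) =
          (ε, -ε, ε, ε, -ε, -ε) ∨
      (quadraticChar F (1 - β), quadraticChar F (1 - β ^ 2), quadraticChar F (1 - β ^ 3),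
        quadraticChar F (1 - β ^ 4), quadraticChar F (1 - β ^ 5), quadraticChar F (1 - β ^ 6)) =
          (ε, -ε, ε, -ε, -ε, ε))

abbrev PL (F : Type) [Field F] := Projectivization F (Fin 2 → F)

def D2 {F : Type} [Field F] (u v : Fin 2 → F) : F := u 0 * v 1 - u 1 * v 0

def invv (F : Type) [Field F] [Fintype F] [DecidableEq F] (u v w : Fin 2 → F) : ℤ :=
  quadraticChar F (D2 u v * D2 v w * D2 w u)

def inv3 (F : Type) [Field F] [Fintype F] [DecidableEq F] (t : PL F × PL F × PL F) : ℤ :=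
  invv F t.1.rep t.2.1.rep t.2.2.rep

lemma chi_sq_mul {F : Type} [Field F] [Fintype F] [DecidableEq F] (a x : F) (ha : a ≠ 0) :
    quadraticChar F (a ^ 2 * x) = quadraticChar F x := by
  rw [map_mul, quadraticChar_sq_one' ha, one_mul]

lemma inv3_mk {F : Type} [Field F] [Fintype F] [DecidableEq F] (u v w : Fin 2 → F)
    (hu : u ≠ 0) (hv : v ≠ 0) (hw : w ≠ 0) :
    inv3 F (Projectivization.mk F u hu, Projectivization.mk F v hv, Projectivization.mk F w hw)
      = invv F u v w := by
  obtain ⟨a, ha⟩ := Projectivization.exists_smul_eq_mk_rep F u hu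
  obtain ⟨b, hb⟩ := Projectivization.exists_smul_eq_mk_rep F v hv
  obtain ⟨c, hc⟩ := Projectivization.exists_smul_eq_mk_rep F w hw
  unfold inv3 invv
  simp only [← ha, ← hb, ← hc]
  have h : ((a : F) * b * c) ≠ 0 := by simp
  rw [← chi_sq_mul _ (D2 u v * D2 v w * D2 w u) h]
  congr 1
  simp only [D2, Pi.smul_apply, Units.smul_def, smul_eq_mul]
  ring

lemma D2_mulVec {F : Type} [Field F] (M : Matrix (Fin 2) (Fin 2) F) (u v : Fin 2 → F) :
    D2 (M *ᵥ u) (M *ᵥ v) = M.det * D2 u v := by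
  simp [D2, Matrix.mulVec, dotProduct, Matrix.det_fin_two]
  ring

lemma inv3_map {F : Type} [Field F] [Fintype F] [DecidableEq F] (M : Matrix (Fin 2) (Fin 2) F)
    (f : (Fin 2 → F) →ₗ[F] (Fin 2 → F)) (hf : Function.Injective f) (hM : ∀ v, f v = M *ᵥ v)
    (p q r : PL F) (hd : M.det ≠ 0) :
    inv3 F (Projectivization.map f hf p, Projectivization.map f hf q, Projectivization.map f hf r)
      = quadraticChar F M.det * inv3 F (p, q, r) := by
  induction p using Projectivization.ind with | h u hu => ?_
  induction q using Projectivization.ind with | h v hv => ?_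
  induction r using Projectivization.ind with | h w hw => ?_
  simp only [Projectivization.map_mk]
  rw [inv3_mk, inv3_mk, invv, invv, hM, hM, hM, D2_mulVec, D2_mulVec, D2_mulVec, ← map_mul,
    ← chi_sq_mul M.det (M.det * _) hd]
  congr 1
  ring

lemma mapSL_mk {F : Type} [Field F] (g : Matrix.SpecialLinearGroup (Fin 2) F) (u : Fin 2 → F)
    (hu : u ≠ 0) : ∃ h, mapSL g (Projectivization.mk F u hu) =
      Projectivization.mk F (g.1 *ᵥ u) h := by
  have : g.1 *ᵥ u = Matrix.SpecialLinearGroup.toLin' g u := by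
    rw [Matrix.SpecialLinearGroup.toLin'_apply, Matrix.toLin'_apply]
  refine ⟨?_, ?_⟩
  · rw [this]
    exact fun h => hu (by simpa using h)
  · unfold mapSL
    rw [Projectivization.map_mk]
    rfl

lemma mapSL_inj {F : Type} [Field F] (g : Matrix.SpecialLinearGroup (Fin 2) F) :
    Function.Injective (mapSL g) := Projectivization.map_injective _ _

lemma mapSL_mul {F : Type} [Field F] (g h : Matrix.SpecialLinearGroup (Fin 2) F) (p : PL F) :
    mapSL (g * h) p = mapSL g (mapSL h p) := by
  induction p using Projectivization.ind with | h u hu => ?_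
  obtain ⟨_, h1⟩ := mapSL_mk h u hu
  obtain ⟨_, h2⟩ := mapSL_mk g (h.1 *ᵥ u) ‹_›
  obtain ⟨_, h3⟩ := mapSL_mk (g * h) u hu
  rw [h1, h2, h3]
  congr 1
  rw [Matrix.mulVec_mulVec]
  rfl

lemma inv3_mapSL {F : Type} [Field F] [Fintype F] [DecidableEq F]
    (g : Matrix.SpecialLinearGroup (Fin 2) F) (p q r : PL F) :
    inv3 F (mapSL g p, mapSL g q, mapSL g r) = inv3 F (p, q, r) := by
  unfold mapSL
  rw [inv3_map g.1]
  · rw [g.2]; simp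
  · intro v
    exact (Matrix.SpecialLinearGroup.toLin'_apply g v).trans (Matrix.toLin'_apply _ _)
  · rw [g.2]; simp

lemma inv3_val {F : Type} [Field F] [Fintype F] [DecidableEq F] (p q r : PL F)
    (h1 : p ≠ q) (h2 : q ≠ r) (h3 : r ≠ p) : inv3 F (p, q, r) = 1 ∨ inv3 F (p, q, r) = -1 := by
  have key : ∀ p q : PL F, p ≠ q → D2 p.rep q.rep ≠ 0 := by
    intro p q hpq h0
    apply hpq
    rw [← p.mk_rep, ← q.mk_rep, Projectivization.mk_eq_mk_iff']
    have hq := q.rep_nonzero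
    unfold D2 at h0
    by_cases hz : q.rep 0 = 0
    · have hz1 : q.rep 1 ≠ 0 := by
        intro h; apply hq; ext i; fin_cases i <;> simp [hz, h]
      refine ⟨p.rep 1 / q.rep 1, ?_⟩
      ext i; fin_cases i
      · simp only [hz, Pi.smul_apply, smul_eq_mul, Fin.zero_eta]
        have : p.rep 0 = 0 := by simpa [hz, hz1] using h0
        simp [hz, this]
      · simp [hz1]
    · refine ⟨p.rep 0 / q.rep 0, ?_⟩
      ext i; fin_cases i
      · simp [hz]
      · simp; field_simp; linear_combination h0
  exact quadraticChar_dichotomy (mul_ne_zero (mul_ne_zero (key _ _ h1) (key _ _ h2)) (key _ _ h3))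

lemma inv3_trans {F : Type} [Field F] [Fintype F] [DecidableEq F] (p q r p' q' r' : PL F)
    (h : inv3 F (p, q, r) = inv3 F (p', q', r')) (h0 : inv3 F (p, q, r) ≠ 0) :
    ∃ g : Matrix.SpecialLinearGroup (Fin 2) F,
      mapSL g p = p' ∧ mapSL g q = q' ∧ mapSL g r = r' := by
  induction p using Projectivization.ind with | h u hu => ?_
  induction q using Projectivization.ind with | h v hv => ?_
  induction r using Projectivization.ind with | h w hw => ?_
  induction p' using Projectivization.ind with | h u' hu' => ?_
  induction q' using Projectivization.ind with | h v' hv' => ?_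
  induction r' using Projectivization.ind with | h w' hw' => ?_
  rw [inv3_mk, inv3_mk] at h
  rw [inv3_mk] at h0
  have h0' := h0
  rw [h] at h0'
  have hA : D2 u v * D2 v w * D2 w u ≠ 0 := fun hh => h0 (by simp [invv, hh])
  have hA' : D2 u' v' * D2 v' w' * D2 w' u' ≠ 0 := fun hh => h0' (by simp [invv, hh])
  have hsq : quadraticChar F ((D2 u v * D2 v w * D2 w u) * (D2 u' v' * D2 v' w' * D2 w' u')) = 1 := by
    rw [map_mul]
    unfold invv at h
    rw [h, ← sq]
    exact quadraticChar_sq_one hA'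
  rw [quadraticChar_one_iff_isSquare (mul_ne_zero hA hA')] at hsq
  obtain ⟨s, hs⟩ := hsq
  have hs0 : s ≠ 0 := by
    rintro rfl
    exact mul_ne_zero hA hA' (by simpa using hs)
  let α := D2 w' v' * D2 u w / s
  let β := D2 u' w' * D2 w v / s
  -- M z = α D(z,v) u' + β D(u,z) v'
  let M : Matrix (Fin 2) (Fin 2) F :=
    !![α * v 1 * u' 0 - β * u 1 * v' 0, -α * v 0 * u' 0 + β * u 0 * v' 0;
       α * v 1 * u' 1 - β * u 1 * v' 1, -α * v 0 * u' 1 + β * u 0 * v' 1]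
  have hdet : M.det = 1 := by
    have : M.det = ((D2 u v * D2 v w * D2 w u) * (D2 u' v' * D2 v' w' * D2 w' u')) / (s * s) := by
      simp only [M, α, β, Matrix.det_fin_two_of, D2]
      field_simp
      ring
    rw [this, hs, div_self (mul_ne_zero hs0 hs0)]
  have hMz : ∀ z, M *ᵥ z = (α * D2 z v) • u' + (β * D2 u z) • v' := by
    intro z
    ext i; fin_cases i <;> simp [M, Matrix.mulVec, dotProduct, D2] <;> ring
  have hDs : D2 u v ≠ 0 ∧ D2 v w ≠ 0 ∧ D2 w u ≠ 0 := by
    simpa [not_or, and_assoc] using hA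
  have self0 : ∀ z : Fin 2 → F, D2 z z = 0 := fun z => by simp [D2]; ring
  refine ⟨⟨M, hdet⟩, ?_, ?_, ?_⟩
  · obtain ⟨_, e⟩ := mapSL_mk ⟨M, hdet⟩ u hu
    rw [e, Projectivization.mk_eq_mk_iff']
    exact ⟨α * D2 u v, by rw [hMz, self0]; simp⟩
  · obtain ⟨_, e⟩ := mapSL_mk ⟨M, hdet⟩ v hv
    rw [e, Projectivization.mk_eq_mk_iff']
    exact ⟨β * D2 u v, by rw [hMz, self0]; simp⟩
  · obtain ⟨_, e⟩ := mapSL_mk ⟨M, hdet⟩ w hw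
    rw [e, Projectivization.mk_eq_mk_iff']
    refine ⟨D2 u w * D2 w v * D2 u' v' / s, ?_⟩
    rw [hMz]
    ext i; fin_cases i <;> simp [α, β, D2] <;> field_simp <;> ring

def t2 {F : Type} [Field F] (t : PL F × PL F × PL F) : Set (PL F) := {t.1, t.2.1, t.2.2}

def lamT (F : Type) [Field F] (t : PL F × PL F × PL F) : ℕ :=
  {S ∈ designBlocks F 13 | t2 t ⊆ S}.ncard

lemma image_block {F : Type} [Field F] (g : Matrix.SpecialLinearGroup (Fin 2) F)
    (S : Set (PL F)) (hS : S ∈ designBlocks F 13) : mapSL g '' S ∈ designBlocks F 13 := by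
  obtain ⟨h, rfl⟩ := hS
  refine ⟨g * h, ?_⟩
  rw [Set.image_image]
  simp only [mapSL_mul]

instance instFinPL (F : Type) [Field F] [Fintype F] : Finite (PL F) := by
  unfold PL; infer_instance

lemma lamT_le {F : Type} [Field F] [Fintype F] [DecidableEq F] (t t' : PL F × PL F × PL F)
    (h : inv3 F t = inv3 F t') (h0 : inv3 F t ≠ 0) : lamT F t ≤ lamT F t' := by
  obtain ⟨g, h1, h2, h3⟩ := inv3_trans t.1 t.2.1 t.2.2 t'.1 t'.2.1 t'.2.2 h h0
  unfold lamT
  refine Set.ncard_le_ncard_of_injOn (fun S => mapSL g '' S) ?_ ?_ (Set.toFinite _)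
  · rintro S ⟨hS, hT⟩
    refine ⟨image_block g S hS, ?_⟩
    rintro x (rfl | rfl | rfl)
    · rw [← h1]; exact Set.mem_image_of_mem _ (hT (by simp [t2]))
    · rw [← h2]; exact Set.mem_image_of_mem _ (hT (by simp [t2]))
    · rw [← h3]; exact Set.mem_image_of_mem _ (hT (by simp [t2]))
  · intro S _ S' _ hSS
    exact (mapSL_inj g).image_injective hSS

lemma lamT_eq {F : Type} [Field F] [Fintype F] [DecidableEq F] (t t' : PL F × PL F × PL F)
    (h : inv3 F t = inv3 F t') (h0 : inv3 F t ≠ 0) : lamT F t = lamT F t' :=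
  le_antisymm (lamT_le t t' h h0) (lamT_le t' t h.symm (h ▸ h0))

/-- ordered triples with a given invariant inside a set -/
def NN (F : Type) [Field F] [Fintype F] [DecidableEq F] (S : Set (PL F)) (e : ℤ) : ℕ :=
  {t : PL F × PL F × PL F | inv3 F t = e ∧ t2 t ⊆ S}.ncard

lemma NN_image_le {F : Type} [Field F] [Fintype F] [DecidableEq F] (S : Set (PL F)) (e : ℤ)
    (g : Matrix.SpecialLinearGroup (Fin 2) F) : NN F S e ≤ NN F (mapSL g '' S) e := by
  unfold NN
  refine Set.ncard_le_ncard_of_injOn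
    (fun t => (mapSL g t.1, mapSL g t.2.1, mapSL g t.2.2)) ?_ ?_ (Set.toFinite _)
  · rintro ⟨p, q, r⟩ ⟨h1, h2⟩
    refine ⟨(inv3_mapSL g p q r).trans h1, ?_⟩
    rintro x (rfl | rfl | rfl) <;> exact Set.mem_image_of_mem _ (h2 (by simp [t2]))
  · rintro ⟨p, q, r⟩ _ ⟨p', q', r'⟩ _ hh
    simp only [Prod.mk.injEq] at hh
    simp [mapSL_inj g hh.1, mapSL_inj g hh.2.1, mapSL_inj g hh.2.2]

lemma mapSL_one {F : Type} [Field F] (p : PL F) : mapSL 1 p = p := by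
  induction p using Projectivization.ind with | h u hu => ?_
  obtain ⟨_, h1⟩ := mapSL_mk 1 u hu
  rw [h1]
  congr 1
  simp

lemma NN_image {F : Type} [Field F] [Fintype F] [DecidableEq F] (S : Set (PL F)) (e : ℤ)
    (g : Matrix.SpecialLinearGroup (Fin 2) F) : NN F (mapSL g '' S) e = NN F S e := by
  refine le_antisymm ?_ (NN_image_le S e g)
  have := NN_image_le (mapSL g '' S) e g⁻¹
  rw [Set.image_image] at this
  simpa [← mapSL_mul, mapSL_one] using this

lemma OO_le {F : Type} [Field F] [Fintype F] [DecidableEq F] (d : F) (e : ℤ)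
    (hd : quadraticChar F d = -1) : NN F Set.univ e ≤ NN F Set.univ (-e) := by
  have hd0 : d ≠ 0 := by rintro rfl; simp at hd
  have hdet : (!![d, 0; 0, 1] : Matrix (Fin 2) (Fin 2) F).det = d := by simp [Matrix.det_fin_two_of]
  have hf : Function.Injective (Matrix.toLin' (!![d, 0; 0, 1] : Matrix (Fin 2) (Fin 2) F)) := by
    rw [injective_iff_map_eq_zero]
    intro a ha
    have h0 := congrFun ha 0
    have h1 := congrFun ha 1
    simp [Matrix.mulVec, dotProduct, hd0] at h0 h1
    ext i; fin_cases i <;> simp [h0, h1]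
  have hinj := Projectivization.map_injective _ hf
  unfold NN
  refine Set.ncard_le_ncard_of_injOn
    (fun t => (Projectivization.map _ hf t.1, Projectivization.map _ hf t.2.1,
      Projectivization.map _ hf t.2.2)) ?_ ?_ (Set.toFinite _)
  · rintro ⟨p, q, r⟩ ⟨h1, h2⟩
    refine ⟨?_, Set.subset_univ _⟩
    show inv3 F (_, _, _) = _
    rw [inv3_map _ _ hf (fun v => Matrix.toLin'_apply _ _) p q r (by rw [hdet]; exact hd0), hdet, hd, h1]
    ring
  · rintro ⟨p, q, r⟩ _ ⟨p', q', r'⟩ _ hh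
    simp only [Prod.mk.injEq] at hh
    simp [hinj hh.1, hinj hh.2.1, hinj hh.2.2]

lemma double_count {F : Type} [Field F] [Fintype F] [DecidableEq F] (e : ℤ) (m : ℕ)
    (hm : ∀ t, inv3 F t = e → lamT F t = m) :
    NN F Set.univ e * m = (designBlocks F 13).ncard * NN F (starterB F 13) e := by
  classical
  haveI : Fintype (PL F) := Fintype.ofFinite _
  have := Finset.card_mul_eq_card_mul
    (s := Finset.univ.filter (fun t : PL F × PL F × PL F => inv3 F t = e))
    (t := (designBlocks F 13).toFinset) (fun t S => t2 t ⊆ S) (m := m)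
    (n := NN F (starterB F 13) e) ?_ ?_
  · rw [Set.ncard_eq_toFinset_card', ← this]
    unfold NN
    rw [Set.ncard_eq_toFinset_card']
    congr 2
    ext t; simp
  · intro t ht
    rw [← hm t (by simpa using ht), lamT, Set.ncard_eq_toFinset_card']
    congr 1
    ext S; simp [Finset.bipartiteAbove]
  · intro S hS
    obtain ⟨g, rfl⟩ : S ∈ designBlocks F 13 := by simpa using hS
    rw [← NN_image _ _ g, NN, Set.ncard_eq_toFinset_card']
    congr 1
    ext t; simp [Finset.bipartiteBelow]

lemma inv3_ne {F : Type} [Field F] [Fintype F] [DecidableEq F] (p q r : PL F)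
    (h : inv3 F (p, q, r) ≠ 0) : p ≠ q ∧ q ≠ r ∧ p ≠ r := by
  have self0 : ∀ z : Fin 2 → F, D2 z z = 0 := fun z => by simp [D2]; ring
  refine ⟨?_, ?_, ?_⟩ <;> rintro rfl <;> apply h <;> simp [inv3, invv, self0]

lemma design_iff {F : Type} [Field F] [Fintype F] [DecidableEq F] (h2 : ringChar F ≠ 2)
    (t0 : PL F × PL F × PL F) (ht0 : inv3 F t0 ≠ 0) (ht0s : t2 t0 ⊆ starterB F 13) :
    gives3Design F 13 ↔ NN F (starterB F 13) 1 = NN F (starterB F 13) (-1) := by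
  obtain ⟨d, hd⟩ := quadraticChar_exists_neg_one h2
  have hO : NN F Set.univ 1 = NN F Set.univ (-1) :=
    le_antisymm (OO_le d 1 hd) (by simpa using OO_le d (-1) hd)
  have hval : ∀ t, inv3 F t ≠ 0 → inv3 F t = 1 ∨ inv3 F t = -1 := by
    rintro ⟨p, q, r⟩ h
    obtain ⟨a, b, c⟩ := inv3_ne p q r h
    exact inv3_val p q r a b c.symm
  have hOp : 0 < NN F Set.univ 1 := by
    have : ∀ e, inv3 F t0 = e → 0 < NN F Set.univ e := by
      intro e he
      exact (Set.ncard_pos (Set.toFinite _)).2 ⟨t0, he, Set.subset_univ _⟩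
    rcases hval t0 ht0 with h | h
    · exact this _ h
    · rw [hO]; exact this _ h
  obtain ⟨tp, htp, -⟩ := (Set.ncard_pos (Set.toFinite _)).1 hOp
  obtain ⟨tm, htm, -⟩ := (Set.ncard_pos (Set.toFinite _)).1 (hO ▸ hOp)
  have cp := double_count (F := F) 1 (lamT F tp)
    (fun t ht => lamT_eq t tp (ht.trans htp.symm) (by rw [ht]; norm_num))
  have cm := double_count (F := F) (-1) (lamT F tm)
    (fun t ht => lamT_eq t tm (ht.trans htm.symm) (by rw [ht]; norm_num))
  have hBmem : starterB F 13 ∈ designBlocks F 13 := by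
    refine ⟨1, ?_⟩
    ext x; simp [mapSL_one]
  have hB : 0 < (designBlocks F 13).ncard :=
    (Set.ncard_pos (Set.toFinite _)).2 ⟨_, hBmem⟩
  constructor
  · rintro ⟨lam, hpos, hl⟩
    have hlam : ∀ t, inv3 F t ≠ 0 → lamT F t = lam := by
      classical
      rintro ⟨p, q, r⟩ h
      obtain ⟨a, b, c⟩ := inv3_ne p q r h
      rw [← hl {p, q, r} (Finset.card_eq_three.2 ⟨p, q, r, a, c, b, rfl⟩)]
      simp [lamT, t2]
    rw [hlam tp (by rw [htp]; norm_num)] at cp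
    rw [hlam tm (by rw [htm]; norm_num), ← hO, cp] at cm
    exact Nat.eq_of_mul_eq_mul_left hB cm
  · intro hN
    have hpm : lamT F tp = lamT F tm := by
      rw [← hN, ← cp, ← hO] at cm
      exact (Nat.eq_of_mul_eq_mul_left hOp cm).symm
    have hlam : ∀ t, inv3 F t ≠ 0 → lamT F t = lamT F tp := by
      intro t ht
      rcases hval t ht with h | h
      · exact lamT_eq t tp (h.trans htp.symm) ht
      · rw [hpm]; exact lamT_eq t tm (h.trans htm.symm) ht
    refine ⟨lamT F tp, ?_, ?_⟩
    · rw [← hlam t0 ht0]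
      exact (Set.ncard_pos (Set.toFinite _)).2 ⟨_, hBmem, ht0s⟩
    · intro T hT
      classical
      obtain ⟨p, q, r, a, b, c, rfl⟩ := Finset.card_eq_three.1 hT
      rw [← hlam (p, q, r)]
      · simp [lamT, t2]
      · rcases inv3_val p q r a c b.symm with h | h <;> rw [h] <;> norm_num

def CC (x1 x2 x3 x4 x5 x6 : ℤ) : Fin 13 → ℤ :=
  ![0, x1, x2, x3, x4, x5, x6, x6, x5, x4, x3, x2, x1]

def sg (b : Bool) : ℤ := if b then 1 else -1

def EE (x1 x2 x3 x4 x5 x6 ε : ℤ) : Prop :=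
  ((x1, x2, x3, x4, x5, x6) = (ε, ε, -ε, ε, -ε, -ε) ∨
   (x1, x2, x3, x4, x5, x6) = (ε, ε, -ε, -ε, -ε, ε) ∨
   (x1, x2, x3, x4, x5, x6) = (ε, -ε, ε, ε, -ε, -ε) ∨
   (x1, x2, x3, x4, x5, x6) = (ε, -ε, ε, -ε, -ε, ε))

set_option synthInstance.maxHeartbeats 400000 in
set_option synthInstance.maxSize 4000 in
instance (x1 x2 x3 x4 x5 x6 ε : ℤ) : Decidable (EE x1 x2 x3 x4 x5 x6 ε) := by
  unfold EE; infer_instance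

lemma finite_check : ∀ a1 a2 a3 a4 a5 a6 : Bool,
    (∑ a : Fin 13, ∑ b : Fin 13, CC (sg a1) (sg a2) (sg a3) (sg a4) (sg a5) (sg a6) a *
      CC (sg a1) (sg a2) (sg a3) (sg a4) (sg a5) (sg a6) (b - a) *
      CC (sg a1) (sg a2) (sg a3) (sg a4) (sg a5) (sg a6) (-b) = 0) ↔
    (EE (sg a1) (sg a2) (sg a3) (sg a4) (sg a5) (sg a6) 1 ∨
     EE (sg a1) (sg a2) (sg a3) (sg a4) (sg a5) (sg a6) (-1)) := by
  decide +kernel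

lemma finite_check' (x1 x2 x3 x4 x5 x6 : ℤ) (h1 : x1 = 1 ∨ x1 = -1) (h2 : x2 = 1 ∨ x2 = -1)
    (h3 : x3 = 1 ∨ x3 = -1) (h4 : x4 = 1 ∨ x4 = -1) (h5 : x5 = 1 ∨ x5 = -1)
    (h6 : x6 = 1 ∨ x6 = -1) (c : Fin 13 → ℤ) (hc : c = CC x1 x2 x3 x4 x5 x6) :
    (∑ i : Fin 13, ∑ j : Fin 13, ∑ k : Fin 13, c (j - i) * c (k - j) * c (i - k) = 0) ↔
    (∃ ε : ℤ, (ε = 1 ∨ ε = -1) ∧ EE x1 x2 x3 x4 x5 x6 ε) := by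
  have hsum : ∀ i : Fin 13, ∑ j : Fin 13, ∑ k : Fin 13, c (j - i) * c (k - j) * c (i - k) =
      ∑ a : Fin 13, ∑ b : Fin 13, c a * c (b - a) * c (-b) := by
    intro i
    rw [← Fintype.sum_equiv (Equiv.addRight i) _ _ (fun a => rfl)]
    refine Finset.sum_congr rfl fun a _ => ?_
    rw [← Fintype.sum_equiv (Equiv.addRight i) _ _ (fun a => rfl)]
    refine Finset.sum_congr rfl fun b _ => ?_
    simp only [Equiv.coe_addRight]
    rw [add_sub_cancel_right, add_sub_add_right_eq_sub, sub_add_cancel_right]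
  simp only [hsum]
  have sgx : ∀ x : ℤ, (x = 1 ∨ x = -1) → ∃ b, x = sg b := by
    rintro x (rfl | rfl)
    · exact ⟨true, rfl⟩
    · exact ⟨false, rfl⟩
  obtain ⟨a1, rfl⟩ := sgx _ h1
  obtain ⟨a2, rfl⟩ := sgx _ h2
  obtain ⟨a3, rfl⟩ := sgx _ h3
  obtain ⟨a4, rfl⟩ := sgx _ h4
  obtain ⟨a5, rfl⟩ := sgx _ h5
  obtain ⟨a6, rfl⟩ := sgx _ h6
  have := finite_check a1 a2 a3 a4 a5 a6
  rw [← hc] at this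
  simp only [Finset.sum_const, Finset.card_univ, Fintype.card_fin, nsmul_eq_mul, or_and_right,
    exists_or, exists_eq_left]
  rw [← this]
  simp

lemma embedPt_inj {F : Type} [Field F] : Function.Injective (embedPt F) := by
  intro x y h
  unfold embedPt at h
  rw [Projectivization.mk_eq_mk_iff'] at h
  obtain ⟨a, ha⟩ := h
  have h0 := congrFun ha 0
  have h1 := congrFun ha 1
  simp at h0 h1
  subst h1
  simpa using h0.symm

lemma inv3_embed {F : Type} [Field F] [Fintype F] [DecidableEq F] (x y z : F) :
    inv3 F (embedPt F x, embedPt F y, embedPt F z) =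
      quadraticChar F (x - y) * quadraticChar F (y - z) * quadraticChar F (z - x) := by
  unfold embedPt
  rw [inv3_mk, invv]
  rw [map_mul, map_mul]
  simp only [D2, Matrix.cons_val_zero, Matrix.cons_val_one, mul_one, one_mul]

lemma NN_starter {F : Type} [Field F] [Fintype F] [DecidableEq F] (β : F)
    (hβ : orderOf β = 13) (e : ℤ) : NN F (starterB F 13) e =
      (Finset.univ.filter (fun s : Fin 13 × Fin 13 × Fin 13 =>
        quadraticChar F (β ^ s.1.1 - β ^ s.2.1.1) * quadraticChar F (β ^ s.2.1.1 - β ^ s.2.2.1) *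
          quadraticChar F (β ^ s.2.2.1 - β ^ s.1.1) = e)).card := by
  classical
  have hinj : Function.Injective (fun i : Fin 13 => embedPt F (β ^ i.1)) := by
    intro i j h
    have h' := embedPt_inj h
    have := pow_injOn_Iio_orderOf (x := β) (by simp [hβ]) (by simp [hβ]) h'
    exact Fin.ext this
  have hp : IsPrimitiveRoot β 13 := hβ ▸ IsPrimitiveRoot.orderOf β
  have hsurj : ∀ p ∈ starterB F 13, ∃ i : Fin 13, embedPt F (β ^ i.1) = p := by
    rintro p ⟨x, hx, rfl⟩
    obtain ⟨i, hi, rfl⟩ := hp.eq_pow_of_pow_eq_one hx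
    exact ⟨⟨i, hi⟩, rfl⟩
  have hmem : ∀ i : Fin 13, embedPt F (β ^ i.1) ∈ starterB F 13 := by
    intro i
    refine ⟨_, ?_, rfl⟩
    show (β ^ i.1) ^ 13 = 1
    rw [← pow_mul, mul_comm, pow_mul, hp.pow_eq_one, one_pow]
  unfold NN
  rw [← Set.ncard_coe_finset]
  symm
  refine Set.ncard_congr (fun s _ => (embedPt F (β ^ s.1.1), embedPt F (β ^ s.2.1.1),
    embedPt F (β ^ s.2.2.1))) ?_ ?_ ?_
  · rintro ⟨i, j, k⟩ h
    refine ⟨?_, ?_⟩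
    · rw [inv3_embed]; simpa using h
    · rintro x (rfl | rfl | rfl) <;> apply hmem
  · rintro ⟨i, j, k⟩ ⟨i', j', k'⟩ _ _ h
    simp only [Prod.mk.injEq] at h
    rw [hinj h.1, hinj h.2.1, hinj h.2.2]
  · rintro ⟨p, q, r⟩ ⟨h, hs⟩
    obtain ⟨i, rfl⟩ := hsurj p (hs (by simp [t2]))
    obtain ⟨j, rfl⟩ := hsurj q (hs (by simp [t2]))
    obtain ⟨k, rfl⟩ := hsurj r (hs (by simp [t2]))
    refine ⟨(i, j, k), ?_, rfl⟩
    rw [inv3_embed] at h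
    simpa using h

lemma card_sum {ι : Type} [Fintype ι] (f : ι → ℤ) (hf : ∀ i, f i = 0 ∨ f i = 1 ∨ f i = -1) :
    (Finset.univ.filter (fun i => f i = 1)).card = (Finset.univ.filter (fun i => f i = -1)).card ↔
      ∑ i, f i = 0 := by
  have : ∑ i, f i = ((Finset.univ.filter (fun i => f i = 1)).card : ℤ) -
      (Finset.univ.filter (fun i => f i = -1)).card := by
    rw [Finset.card_filter, Finset.card_filter]
    push_cast
    rw [← Finset.sum_sub_distrib]
    refine Finset.sum_congr rfl fun i _ => ?_
    rcases hf i with h | h | h <;> simp [h]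
  rw [this, sub_eq_zero, Nat.cast_inj]

theorem stmt_18 (F : Type) [Field F] [Fintype F] [DecidableEq F]
    (q : ℕ) (hq : Fintype.card F = q) (hq52 : q % 52 = 1)
    (β : F) (hβ : orderOf β = 13) :
    gives3Design F 13 ↔ goodChiSequence F β := by
  have hp : IsPrimitiveRoot β 13 := hβ ▸ IsPrimitiveRoot.orderOf β
  have hβ0 : β ≠ 0 := hp.ne_zero (by norm_num)
  have h2 : ringChar F ≠ 2 := by
    intro h
    have := FiniteField.even_card_of_char_two h
    omega
  have hneg : quadraticChar F (-1) = 1 := by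
    rw [quadraticChar_one_iff_isSquare (by simp)]
    rw [FiniteField.isSquare_neg_one_iff]
    omega
  have hchiβ : quadraticChar F β = 1 := by
    rcases quadraticChar_dichotomy hβ0 with h | h
    · exact h
    · have h3 : quadraticChar F (β ^ 13) = 1 := by rw [hp.pow_eq_one]; simp
      rw [map_pow, h] at h3
      norm_num at h3
  have hsymm : ∀ x y : F, quadraticChar F (x - y) = quadraticChar F (y - x) := by
    intro x y
    rw [← neg_sub y x, neg_eq_neg_one_mul, map_mul, hneg, one_mul]
  set c : Fin 13 → ℤ := fun i => quadraticChar F (1 - β ^ i.1) with hcdef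
  have hdiff : ∀ i j : Fin 13, quadraticChar F (β ^ i.1 - β ^ j.1) = c (j - i) := by
    intro i j
    have hj : β ^ j.1 = β ^ i.1 * β ^ (j - i).1 := by
      rw [← pow_add, ← pow_mod_orderOf β (_ + _), hβ]
      congr 1
      rw [Fin.sub_def]
      simp only
      omega
    rw [hj, ← mul_one_sub, map_mul, map_pow, hchiβ, one_pow, one_mul]
  have hne : ∀ i : ℕ, 0 < i → i < 13 → 1 - β ^ i ≠ 0 := by
    intro i h0 h1 h
    exact hp.pow_ne_one_of_pos_of_lt h0.ne' h1 (sub_eq_zero.1 h).symm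
  have hcneg : ∀ i : Fin 13, c (-i) = c i := by
    intro i
    have e1 := hdiff i 0
    have e2 := hdiff 0 i
    rw [zero_sub] at e1
    rw [sub_zero] at e2
    rw [← e1, ← e2, hsymm]
  have hv : ∀ i : ℕ, 0 < i → i < 13 →
      quadraticChar F (1 - β ^ i) = 1 ∨ quadraticChar F (1 - β ^ i) = -1 :=
    fun i h0 h1 => quadraticChar_dichotomy (hne i h0 h1)
  have hcC : c = CC (quadraticChar F (1 - β)) (quadraticChar F (1 - β ^ 2))
      (quadraticChar F (1 - β ^ 3)) (quadraticChar F (1 - β ^ 4)) (quadraticChar F (1 - β ^ 5))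
      (quadraticChar F (1 - β ^ 6)) := by
    have e : ∀ i j : Fin 13, i = -j → c i = c j := fun i j h => by rw [h, hcneg]
    ext i
    fin_cases i
    · simp [hcdef, CC]
    · simp [hcdef, CC]
    · rfl
    · rfl
    · rfl
    · rfl
    · rfl
    · exact e 7 6 (by decide)
    · exact e 8 5 (by decide)
    · exact e 9 4 (by decide)
    · exact e 10 3 (by decide)
    · exact e 11 2 (by decide)
    · refine (e 12 1 (by decide)).trans ?_
      simp [hcdef, CC]
  have main := finite_check' _ _ _ _ _ _ (by simpa using hv 1 (by norm_num) (by norm_num))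
    (hv 2 (by norm_num) (by norm_num)) (hv 3 (by norm_num) (by norm_num))
    (hv 4 (by norm_num) (by norm_num)) (hv 5 (by norm_num) (by norm_num))
    (hv 6 (by norm_num) (by norm_num)) c hcC
  have hgood : goodChiSequence F β ↔ _ := main.symm
  rw [hgood]
  have hmem : ∀ i : ℕ, embedPt F (β ^ i) ∈ starterB F 13 := by
    intro i
    refine ⟨_, ?_, rfl⟩
    show (β ^ i) ^ 13 = 1
    rw [← pow_mul, mul_comm, pow_mul, hp.pow_eq_one, one_pow]
  rw [design_iff h2 (embedPt F (β ^ 0), embedPt F (β ^ 1), embedPt F (β ^ 2))]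
  · rw [NN_starter β hβ, NN_starter β hβ]
    simp only [hdiff]
    rw [card_sum (fun s : Fin 13 × Fin 13 × Fin 13 =>
      c (s.2.1 - s.1) * c (s.2.2 - s.2.1) * c (s.1 - s.2.2))]
    · simp only [Fintype.sum_prod_type]
    · intro s
      have hc3 : ∀ i, c i = 0 ∨ c i = 1 ∨ c i = -1 := by
        intro i
        by_cases h : 1 - β ^ i.1 = 0
        · left; simp [hcdef, h]
        · right; exact quadraticChar_dichotomy h
      rcases hc3 (s.2.1 - s.1) with h | h | h <;> rcases hc3 (s.2.2 - s.2.1) with h' | h' | h' <;>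
        rcases hc3 (s.1 - s.2.2) with h'' | h'' | h'' <;> simp [h, h', h'']
  · rw [inv3_embed, ← map_mul, ← map_mul]
    rw [Ne, quadraticChar_eq_zero_iff]
    have a1 := hne 1 (by norm_num) (by norm_num)
    have a2 := hne 2 (by norm_num) (by norm_num)
    have e1 : β ^ 1 - β ^ 2 = β * (1 - β ^ 1) := by ring
    have e2 : β ^ 2 - β ^ 0 = -(1 - β ^ 2) := by ring
    rw [e1, e2, pow_zero]
    exact mul_ne_zero (mul_ne_zero a1 (mul_ne_zero hβ0 a1)) (neg_ne_zero.2 a2)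
  · rintro x (rfl | rfl | rfl) <;> apply hmem
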